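/- (Key estimate in the proof of Lemma 3.1.) Let δ > 0, x ∈ ℝ², let n ∈ ℝ² be a unit vector, let s ∈ [0,δ], set x̄ := x + s n, and let D := {y ∈ B(x,δ) : (y − x̄)·n ≥ 0} be the portion of the ball B(x,δ) on the far side of the line through x̄ perpendicular to n. Then −1/2 ≤ ∫_D J_δ(|x−y|) [ ((y−x̄)·n)² − s² ] dy ≤ 1/2. -/

import Mathlib

/-!
Put `t = ⟪y - x, n⟫`. The bracket in the integrand is `(t - s)² - s² = t² - 2 s t`, and on `D` one
has `t ≥ s ≥ 0`, so `|t² - 2 s t| ≤ t²`. Hence both bounds follow once the integral of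
`J_δ(|y - x|) t²` over the half-plane `t ≥ 0` is known to be `1/2`. After rescaling to `δ = 1`, this
integral is computed by symmetry (`integral_quarter`): the half-plane integrand, summed over the
four rotations of the plane by multiples of a right angle, gives `J(|z|) |z|²`, whose integral
is `2`.
-/

open MeasureTheory Real RealInnerProductSpace

noncomputable section

abbrev R2 : Type := EuclideanSpace ℝ (Fin 2)

/-- The rescaled kernel `J_δ(r) = δ⁻⁴ J(r/δ)`. -/
def Jd (J : ℝ → ℝ) (δ : ℝ) : ℝ → ℝ := fun r => (1 / δ ^ 4) * J (r / δ)

/-- Rotation of the plane by a right angle. -/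
def rot : R2 ≃ₗᵢ[ℝ] R2 :=
  LinearIsometry.toLinearIsometryEquiv
    { toFun := fun z => !₂[-z 1, z 0]
      map_add' := by
        intro a b; ext i; fin_cases i
        · simp; ring
        · simp
      map_smul' := by intro c a; ext i; fin_cases i <;> simp
      norm_map' := by
        intro z
        simp [EuclideanSpace.norm_eq, Fin.sum_univ_two, add_comm] } rfl

lemma rot_zero (z : R2) : rot z 0 = -z 1 := rfl

lemma rot_one (z : R2) : rot z 1 = z 0 := rfl

/-- The second-moment density `J(|z|) ⟪z, n⟫²` in direction `n`, cut off to the half-plane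
`0 ≤ ⟪z, n⟫`. -/
def halfDensity (J : ℝ → ℝ) (n : R2) : R2 → ℝ :=
  {z : R2 | 0 ≤ ⟪z, n⟫}.indicator fun z => J ‖z‖ * ⟪z, n⟫ ^ 2

lemma halfDensity_nonneg {J : ℝ → ℝ} (hJ : ∀ r, 0 ≤ J r) (n z : R2) :
    0 ≤ halfDensity J n z :=
  Set.indicator_nonneg (fun _ _ => mul_nonneg (hJ _) (sq_nonneg _)) z

/-- On the line `⟪z, n⟫ = 0`, which both half-planes contain, the density vanishes, so nothing is
counted twice. -/
lemma halfDensity_add_neg (J : ℝ → ℝ) (n z : R2) :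
    halfDensity J n z + halfDensity J n (-z) = J ‖z‖ * ⟪z, n⟫ ^ 2 := by
  simp only [halfDensity, Set.indicator_apply, Set.mem_ofPred_eq, inner_neg_left, norm_neg,
    Left.nonneg_neg_iff, neg_sq]
  rcases lt_trichotomy (⟪z, n⟫ : ℝ) 0 with h | h | h
  · simp [h.not_ge, h.le]
  · simp [h]
  · simp [h.not_ge, h.le]

lemma inner_sq_add_inner_rot_sq {n : R2} (hn : ‖n‖ = 1) (z : R2) :
    (⟪z, n⟫ : ℝ) ^ 2 + ⟪rot z, n⟫ ^ 2 = ‖z‖ ^ 2 := by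
  have h1 : n 0 ^ 2 + n 1 ^ 2 = 1 := by
    have := EuclideanSpace.real_norm_sq_eq n
    rw [hn, Fin.sum_univ_two] at this
    linarith
  rw [EuclideanSpace.real_norm_sq_eq z]
  simp only [PiLp.inner_apply, Fin.sum_univ_two, rot_zero, rot_one, RCLike.inner_apply,
    conj_trivial]
  linear_combination (z 0 ^ 2 + z 1 ^ 2) * h1

lemma integrable_halfDensity {J : ℝ → ℝ} (hJ : ∀ r, 0 ≤ J r)
    (hJ_int : Integrable (fun z : R2 => J ‖z‖))
    (hJ2 : Integrable (fun z : R2 => J ‖z‖ * ‖z‖ ^ 2)) {n : R2} (hn : ‖n‖ = 1) :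
    Integrable (halfDensity J n) := by
  refine hJ2.mono' ?_ (Filter.Eventually.of_forall fun z => ?_)
  · refine AEStronglyMeasurable.indicator ?_ (measurableSet_le (by fun_prop) (by fun_prop))
    exact hJ_int.aestronglyMeasurable.mul (by fun_prop : Continuous _).aestronglyMeasurable
  · rw [Real.norm_of_nonneg (halfDensity_nonneg hJ n z)]
    have h := halfDensity_add_neg J n z
    have h' := mul_le_mul_of_nonneg_left
      (le_of_add_le_of_nonneg_left (inner_sq_add_inner_rot_sq hn z).le (sq_nonneg _)) (hJ ‖z‖)
    linarith [halfDensity_nonneg hJ n (-z)]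

/-- Summing the half-plane density over the four rotations by multiples of a right angle gives
`J(|z|) |z|²`, so its integral is a quarter of the full second moment. -/
lemma integral_quarter {J : ℝ → ℝ} {n : R2} (hn : ‖n‖ = 1)
    (hI : Integrable (halfDensity J n)) :
    4 * ∫ z, halfDensity J n z = ∫ z : R2, J ‖z‖ * ‖z‖ ^ 2 := by
  have hp : ∀ z : R2, J ‖z‖ * ‖z‖ ^ 2 = (halfDensity J n z + halfDensity J n (-z)) +
      (halfDensity J n (rot z) + halfDensity J n (-rot z)) := by
    intro z
    rw [halfDensity_add_neg, halfDensity_add_neg, LinearIsometryEquiv.norm_map,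
      ← inner_sq_add_inner_rot_sq hn z, mul_add]
  have hsum : Integrable fun z => halfDensity J n z + halfDensity J n (-z) := hI.add hI.comp_neg
  have hmp := rot.measurePreserving
  have hemb := rot.toHomeomorph.measurableEmbedding
  have hrot : ∫ z, (halfDensity J n (rot z) + halfDensity J n (-rot z)) =
      ∫ z, (halfDensity J n z + halfDensity J n (-z)) :=
    hmp.integral_comp hemb fun z => halfDensity J n z + halfDensity J n (-z)
  have hsumrot : Integrable fun z => halfDensity J n (rot z) + halfDensity J n (-rot z) :=
    (hmp.integrable_comp_emb hemb).2 hsum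
  simp_rw [hp]
  rw [integral_add hsum hsumrot, hrot, integral_add hI hI.comp_neg,
    integral_neg_eq_self (halfDensity J n)]
  ring

/-- Key estimate in the proof of Lemma 3.1: with `x̄ = x + s n` and
`D = {y ∈ B(x,δ) : (y − x̄)·n ≥ 0}`, the integral
`∫_D J_δ(|x−y|) [((y−x̄)·n)² − s²] dy` lies in `[−1/2, 1/2]`. -/
theorem statement3
    (J : ℝ → ℝ)
    (hJ_nonneg : ∀ r, 0 ≤ J r)
    (hJ_supp : ∀ r : ℝ, 1 < r → J r = 0)
    (hJ_mono : AntitoneOn J (Set.Ici 0))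
    (hJ_pos : ∀ r ∈ Set.Icc (0:ℝ) 1, 0 < J r)
    (hJ_int : Integrable (fun z : R2 => J ‖z‖))
    (hJ_norm : (∫ z : R2, J ‖z‖ * ‖z‖ ^ 2) = 2)
    (δ : ℝ) (hδ : 0 < δ)
    (x : R2) (n : R2) (hn : ‖n‖ = 1)
    (s : ℝ) (hs : s ∈ Set.Icc 0 δ) :
    -(1/2) ≤ (∫ y in {y : R2 | y ∈ Metric.ball x δ ∧ 0 ≤ ⟪y - (x + s • n), n⟫},
        Jd J δ ‖x - y‖ * (⟪y - (x + s • n), n⟫ ^ 2 - s ^ 2)) ∧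
      (∫ y in {y : R2 | y ∈ Metric.ball x δ ∧ 0 ≤ ⟪y - (x + s • n), n⟫},
        Jd J δ ‖x - y‖ * (⟪y - (x + s • n), n⟫ ^ 2 - s ^ 2)) ≤ 1/2 := by
  obtain ⟨hs0, -⟩ := hs
  -- A non-integrable function has integral `0`, so `hJ_norm` forces integrability.
  have hJ2 : Integrable (fun z : R2 => J ‖z‖ * ‖z‖ ^ 2) := by
    by_contra h
    rw [integral_undef h] at hJ_norm
    norm_num at hJ_norm
  have hI := integrable_halfDensity hJ_nonneg hJ_int hJ2 hn
  have hhalf : ∫ z, halfDensity J n z = 1 / 2 := by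
    have := integral_quarter hn hI
    linarith
  set g : R2 → ℝ := fun y => (δ ^ 2)⁻¹ * halfDensity J n (δ⁻¹ • (y - x)) with hg
  have hg_int : Integrable g :=
    ((hI.comp_smul (inv_ne_zero hδ.ne')).comp_sub_right x).const_mul _
  have hg_nonneg : ∀ y, 0 ≤ g y := fun y =>
    mul_nonneg (by positivity) (halfDensity_nonneg hJ_nonneg n _)
  have hg_half : ∫ y, g y = 1 / 2 := by
    rw [hg, integral_const_mul,
      integral_sub_right_eq_self (fun y => halfDensity J n (δ⁻¹ • y)) x,
      Measure.integral_comp_inv_smul, hhalf, finrank_euclideanSpace_fin,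
      abs_of_nonneg (by positivity), smul_eq_mul]
    field_simp
  set D : Set R2 := {y : R2 | y ∈ Metric.ball x δ ∧ 0 ≤ ⟪y - (x + s • n), n⟫} with hD
  have hDm : MeasurableSet D :=
    measurableSet_ball.inter
      (measurableSet_le (f := fun _ => (0 : ℝ)) (g := fun y : R2 => ⟪y - (x + s • n), n⟫)
        (by fun_prop) (by fun_prop))
  have hbound : ∀ y ∈ D,
      ‖Jd J δ ‖x - y‖ * (⟪y - (x + s • n), n⟫ ^ 2 - s ^ 2)‖ ≤ g y := by
    rintro y ⟨-, hy⟩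
    have ht : (⟪y - (x + s • n), n⟫ : ℝ) = ⟪y - x, n⟫ - s := by
      rw [← sub_sub, inner_sub_left, real_inner_smul_left, real_inner_self_eq_norm_sq, hn]
      ring
    rw [ht] at hy ⊢
    have hmem : δ⁻¹ • (y - x) ∈ {z : R2 | 0 ≤ ⟪z, n⟫} := by
      rw [Set.mem_ofPred_eq, real_inner_smul_left]
      exact mul_nonneg (by positivity) (by linarith)
    have hnorm : ‖δ⁻¹ • (y - x)‖ = ‖x - y‖ / δ := by
      rw [norm_smul, norm_inv, Real.norm_of_nonneg hδ.le, norm_sub_rev, div_eq_inv_mul]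
    have hgy : g y = Jd J δ ‖x - y‖ * ⟪y - x, n⟫ ^ 2 := by
      rw [hg]
      simp only [halfDensity, Jd]
      rw [Set.indicator_of_mem hmem, hnorm, real_inner_smul_left]
      field_simp
    have hJd : 0 ≤ Jd J δ ‖x - y‖ := mul_nonneg (by positivity) (hJ_nonneg _)
    rw [hgy, norm_mul, Real.norm_of_nonneg hJd]
    refine mul_le_mul_of_nonneg_left ?_ hJd
    rw [Real.norm_eq_abs, abs_le]
    constructor <;> nlinarith
  have hle := norm_integral_le_of_norm_le hg_int.restrict (ae_restrict_of_forall_mem hDm hbound)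
  have hle' := setIntegral_le_integral (s := D) hg_int (Filter.Eventually.of_forall hg_nonneg)
  rw [hg_half] at hle'
  exact abs_le.1 (hle.trans hle')
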